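/- arXiv:2506.22145 — 2 statements merged into one kernel-verified Lean document; each statement's English description precedes it below -/
import Mathlib

section
/- Let T be a Cayley tree labelled with [n]_0. The second row of blob(T) consists of the numbers 1,…,n−1 each appearing exactly once (so blob(T) is a permutation of {1,…,n−1}) if and only if T is a path graph with endpoints 0 and n. Moreover, if P is such a path with interior word w(P) = w_1 w_2 ⋯ w_{n−1} (the labels along the path from 0 to n, excluding 0 and n), decomposed at its left-to-right maxima as w(P) = r_1 a^1_1 ⋯ a^1_{l_1} r_2 a^2_1 ⋯ a^2_{l_2} ⋯ r_k a^k_1 ⋯ a^k_{l_k} with r_1 < r_2 < ⋯ < r_k, then blob(P), viewed as a permutation of {1,…,n−1}, equals the product of the disjoint cycles (r_i a^i_{l_i} a^i_{l_i −1} ⋯ a^i_2 a^i_1) for i = 1,…,k; equivalently, blob(P) is the inverse of the permutation obtained by applying Foata's fundamental transformation to w(P). -/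
/-!
Let `r` be the smallest record, and let `σ` send each record to the next one and fix all other
vertices, so that `blob = f ∘ σ`. Since `n` is a record, `σ` is a bijection from `{1,…,n-1}` onto
`{1,…,n} \ {r}`. Moreover `f r = 0`, because the child of the root above `r` is itself a record.
So `blob` permutes `{1,…,n-1}` if and only if `f` maps `{1,…,n}` bijectively onto `{0,…,n-1}`, that
is, if and only if the tree is a path from `0` to `n`.

For a path, the ancestors of a letter of its word are the letters before it, so the records are the
left-to-right maxima, in this order. If the letter after `w p` is not a record, `blob` sends it to
its parent `w p`. If it is one, it is the next record after the head of the block containing `w p`,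
so `blob` sends this head to `w p`.
-/

open scoped Classical

namespace WearyParking

/-- `f` is the parent function of a Cayley tree on `{0,…,n}` rooted at `0`:
`f 0 = 0`, `f` is pinned to `0` outside `{1,…,n}`, `f` maps `{1,…,n}` into `{0,…,n}`,
and every vertex reaches the root under iteration. -/
def IsCayleyTree (n : ℕ) (f : ℕ → ℕ) : Prop :=
  f 0 = 0 ∧ (∀ i, n < i → f i = 0) ∧
  (∀ i, 1 ≤ i → i ≤ n → f i ≤ n) ∧
  (∀ i, 1 ≤ i → i ≤ n → ∃ k, f^[k] i = 0)

/-- A non-root vertex `i` is a record of the tree if it is greater than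
all of its ancestors. -/
def IsRecord (n : ℕ) (f : ℕ → ℕ) (i : ℕ) : Prop :=
  1 ≤ i ∧ i ≤ n ∧ ∀ k, 1 ≤ k → f^[k] i < i

/-- The smallest record larger than `i`. -/
noncomputable def nextRecord (n : ℕ) (f : ℕ → ℕ) (i : ℕ) : ℕ :=
  sInf {j | IsRecord n f j ∧ i < j}

/-- The record (blob) code of the tree, a function on `{1,…,n-1}`:
at a non-record position it records the parent, and at a record position it
records the parent of the next record. -/
noncomputable def blob (n : ℕ) (f : ℕ → ℕ) (i : ℕ) : ℕ :=
  if IsRecord n f i then f (nextRecord n f i) else f i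

/-- Number of children of vertex `v` in the tree. -/
def numChildren (n : ℕ) (f : ℕ → ℕ) (v : ℕ) : ℕ :=
  ((Finset.Icc 1 n).filter fun i => f i = v).card

/-- The list of the first `i+1` vertices visited by the priority-first search:
start at the root `0`; at each step visit the smallest unvisited vertex whose
parent has been visited. -/
noncomputable def wearyList (n : ℕ) (f : ℕ → ℕ) : ℕ → List ℕ
  | 0 => [0]
  | (i + 1) =>
      wearyList n f i ++
        [sInf {v | 1 ≤ v ∧ v ≤ n ∧ v ∉ wearyList n f i ∧ f v ∈ wearyList n f i}]

/-- The weary permutation of the tree: `weary n f i` is the `i`-th vertex visited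
by the priority-first search (with `weary n f 0 = 0`). -/
noncomputable def weary (n : ℕ) (f : ℕ → ℕ) (i : ℕ) : ℕ :=
  (wearyList n f n).getD i 0

/-- The inverse of the weary permutation. -/
noncomputable def wearyInv (n : ℕ) (f : ℕ → ℕ) (v : ℕ) : ℕ :=
  sInf {i | weary n f i = v}

/-- The preference sequence `π_T` of the tree: `π_T i = ω_T⁻¹ (f_T i) + 1`. -/
noncomputable def pref (n : ℕ) (f : ℕ → ℕ) (i : ℕ) : ℕ :=
  wearyInv n f (f i) + 1

/-- Parent function of the priority tree `pt(T)`: `ω_T⁻¹ ∘ f_T ∘ ω_T`. -/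
noncomputable def prioParent (n : ℕ) (f : ℕ → ℕ) (i : ℕ) : ℕ :=
  wearyInv n f (f (weary n f i))

/-- The list of spots occupied by cars `1,…,c` in the classical parking process:
car `c` parks at the first spot `≥ π c` not occupied by an earlier car. -/
noncomputable def spotList (π : ℕ → ℕ) : ℕ → List ℕ
  | 0 => []
  | (c + 1) => spotList π c ++ [sInf {s | π (c + 1) ≤ s ∧ s ∉ spotList π c}]

/-- The spot where car `c` ends up in the classical parking process. -/
noncomputable def spot (π : ℕ → ℕ) (c : ℕ) : ℕ :=
  (spotList π c).getD (c - 1) 0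

/-- `π` is a parking function of length `n`: preferences lie in `{1,…,n}`
(pinned to `1` outside `{1,…,n}`) and every car parks within the `n` spots. -/
def IsParkingFun (n : ℕ) (π : ℕ → ℕ) : Prop :=
  (∀ c, 1 ≤ c → c ≤ n → 1 ≤ π c ∧ π c ≤ n) ∧
  (∀ c, c = 0 ∨ n < c → π c = 1) ∧
  (∀ c, 1 ≤ c → c ≤ n → spot π c ≤ n)

/-- The bird's-eye permutation `ω_π`: the car parked at spot `i` (and `0` at `0`). -/
noncomputable def birdsEye (n : ℕ) (π : ℕ → ℕ) (i : ℕ) : ℕ :=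
  if i = 0 then 0 else sInf {c | 1 ≤ c ∧ c ≤ n ∧ spot π c = i}

/-- The inverse of the bird's-eye permutation. -/
noncomputable def birdsEyeInv (n : ℕ) (π : ℕ → ℕ) (c : ℕ) : ℕ :=
  sInf {i | birdsEye n π i = c}

/-- Parent function of the parking tree `PT(π)`: `f_π i = ω_π (π i - 1)`. -/
noncomputable def ptParent (n : ℕ) (π : ℕ → ℕ) (i : ℕ) : ℕ :=
  if 1 ≤ i ∧ i ≤ n then birdsEye n π (π i - 1) else 0

/-- `v` is a record of the parking function `π`, i.e. a left-to-right maximum of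
the word `ω_π(1) ω_π(2) ⋯ ω_π(n)`. -/
def IsPfRecord (n : ℕ) (π : ℕ → ℕ) (v : ℕ) : Prop :=
  ∃ i, 1 ≤ i ∧ i ≤ n ∧ birdsEye n π i = v ∧ ∀ j, 1 ≤ j → j < i → birdsEye n π j < v

/-- The waiting time of the tree: `wait T = Σ_{i=1}^n (i - f_{pt(T)}(i))`. -/
noncomputable def wait (n : ℕ) (f : ℕ → ℕ) : ℕ :=
  ∑ i ∈ Finset.Icc 1 n, (i - prioParent n f i)

/-- The number of priority small ascents of the tree. -/
noncomputable def psa (n : ℕ) (f : ℕ → ℕ) : ℕ :=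
  ((Finset.Icc 1 n).filter fun i => prioParent n f i = i - 1).card

/-- The number of children of the root. -/
def degRoot (n : ℕ) (f : ℕ → ℕ) : ℕ := numChildren n f 0

/-- The children sequence: `chseq n f j` is the number of vertices with exactly
`j` children. -/
def chseq (n : ℕ) (f : ℕ → ℕ) (j : ℕ) : ℕ :=
  ((Finset.Icc 0 n).filter fun v => numChildren n f v = j).card

/-- The number of probes of the parking function: `n` plus the total displacement. -/
noncomputable def probes (n : ℕ) (π : ℕ → ℕ) : ℕ :=
  n + ∑ c ∈ Finset.Icc 1 n, (spot π c - π c)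

/-- The number of lucky cars of `π`: cars parking at their preferred spot. -/
noncomputable def lucky (n : ℕ) (π : ℕ → ℕ) : ℕ :=
  ((Finset.Icc 1 n).filter fun c => spot π c = π c).card

/-- The number of `1`s in `π`. -/
def ones (n : ℕ) (π : ℕ → ℕ) : ℕ :=
  ((Finset.Icc 1 n).filter fun c => π c = 1).card

/-- The multiplicity of the value `v` in the parking function `π`. -/
def multIn (n : ℕ) (π : ℕ → ℕ) (v : ℕ) : ℕ :=
  ((Finset.Icc 1 n).filter fun c => π c = v).card

/-- The multiplicity sequence: `multSeq n π j` is the number of values in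
`{1,…,n+1}` appearing exactly `j` times in `π`. -/
def multSeq (n : ℕ) (π : ℕ → ℕ) (j : ℕ) : ℕ :=
  ((Finset.Icc 1 (n + 1)).filter fun v => multIn n π v = j).card

/-- The tree is a path graph with endpoints `0` and `n`: every vertex has at most
one child and `n` is the (unique) leaf. -/
def IsPathTree (n : ℕ) (f : ℕ → ℕ) : Prop :=
  (∀ v, v ≤ n → numChildren n f v ≤ 1) ∧ numChildren n f n = 0

/-- `g` is the parent map of a rooted forest on `{1,…,n}` rooted at `{1,…,k}`:
the vertices `1,…,k` are roots (fixed points), every other vertex of `{1,…,n}` has a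
parent in `{1,…,n}`, every vertex reaches one of the roots under iteration, and `g`
is pinned to `0` outside `{1,…,n}`. -/
def IsForestRootedAt (n k : ℕ) (g : ℕ → ℕ) : Prop :=
  (∀ i, 1 ≤ i → i ≤ k → g i = i) ∧
  (∀ i, k < i → i ≤ n → 1 ≤ g i ∧ g i ≤ n) ∧
  (∀ i, 1 ≤ i → i ≤ n → ∃ m, 1 ≤ g^[m] i ∧ g^[m] i ≤ k) ∧
  (∀ i, i = 0 ∨ n < i → g i = 0)

section

open Set Function

lemma bijOn_of_injOn_of_ncard_le {α β : Type*} {f : α → β} {s : Set α} {t : Set β}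
    (ht : t.Finite) (hmaps : MapsTo f s t) (hinj : InjOn f s) (hcard : t.ncard ≤ s.ncard) :
    BijOn f s t := by
  have himage : f '' s = t :=
    eq_of_subset_of_ncard_le hmaps.image_subset (hcard.trans_eq hinj.ncard_image.symm) ht
  exact himage ▸ hinj.bijOn_image

lemma eq_of_isPeriodicPt_of_iterate_eq {α : Type*} {f : α → α} {x a : α} {k m : ℕ}
    (ha : IsFixedPt f a) (hx : IsPeriodicPt f k x) (hk : 0 < k) (hm : f^[m] x = a) : x = a :=
  calc x = f^[k * m - m + m] x := by
        rw [Nat.sub_add_cancel (Nat.le_mul_of_pos_left m hk)]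
        exact (hx.mul_const m).eq.symm
    _ = f^[k * m - m] a := by rw [iterate_add_apply, hm]
    _ = a := ha.iterate _

section Advance

/-- The map sending each element of `R` to the next larger element of `R` and fixing every number
outside `R`; a largest element of `R` is sent to the junk value `sInf ∅ = 0`. The record code
is the parent function precomposed with this map, where `R` is the set of records. -/
noncomputable def advance (R : Set ℕ) (i : ℕ) : ℕ :=
  if i ∈ R then sInf {j | j ∈ R ∧ i < j} else i

variable {R : Set ℕ} {m n : ℕ}

lemma sInf_gt_mem {i : ℕ} (hn : n ∈ R) (hi : i < n) :
    sInf {j | j ∈ R ∧ i < j} ∈ R ∧ i < sInf {j | j ∈ R ∧ i < j} :=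
  Nat.sInf_mem (s := {j | j ∈ R ∧ i < j}) ⟨n, hn, hi⟩

lemma strictMonoOn_advance (hn : n ∈ R) : StrictMonoOn (advance R) (R ∩ Iio n) := by
  rintro i ⟨hi, -⟩ j ⟨hj, hjn⟩ hij
  rw [advance, advance, if_pos hi, if_pos hj]
  have hle : sInf {k | k ∈ R ∧ i < k} ≤ j := Nat.sInf_le ⟨hj, hij⟩
  exact hle.trans_lt (sInf_gt_mem hn hjn).2

lemma advance_mem_iff {i : ℕ} (hn : n ∈ R) (hi : i < n) : advance R i ∈ R ↔ i ∈ R := by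
  by_cases hiR : i ∈ R
  · rw [advance, if_pos hiR]
    exact iff_of_true (sInf_gt_mem hn hi).1 hiR
  · rw [advance, if_neg hiR]

lemma injOn_advance (hn : n ∈ R) : InjOn (advance R) (Iio n) := by
  intro i hi j hj hij
  have hiff : i ∈ R ↔ j ∈ R := by rw [← advance_mem_iff hn hi, hij, advance_mem_iff hn hj]
  by_cases hiR : i ∈ R
  · exact (strictMonoOn_advance hn).injOn ⟨hiR, hi⟩ ⟨hiff.1 hiR, hj⟩ hij
  · rwa [advance, advance, if_neg hiR, if_neg (mt hiff.2 hiR)] at hij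

lemma mapsTo_advance (hR : R ⊆ Icc m n) (hn : n ∈ R) :
    MapsTo (advance R) (Ico m n) (Icc m n \ {sInf R}) := by
  intro i hi
  by_cases hiR : i ∈ R
  · obtain ⟨hmem, hlt⟩ := sInf_gt_mem hn hi.2
    rw [advance, if_pos hiR]
    exact ⟨hR hmem, ((Nat.sInf_le hiR).trans_lt hlt).ne'⟩
  · rw [advance, if_neg hiR]
    exact ⟨Ico_subset_Icc_self hi, fun h ↦ hiR (h ▸ Nat.sInf_mem ⟨n, hn⟩)⟩

lemma bijOn_advance (hR : R ⊆ Icc m n) (hn : n ∈ R) :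
    BijOn (advance R) (Ico m n) (Icc m n \ {sInf R}) := by
  refine bijOn_of_injOn_of_ncard_le ((finite_Icc m n).subset sdiff_subset) (mapsTo_advance hR hn)
    ((injOn_advance hn).mono Ico_subset_Iio_self) ?_
  rw [ncard_sdiff_singleton_of_mem (hR (Nat.sInf_mem ⟨n, hn⟩)), ncard_Icc_nat, ncard_Ico_nat,
    Nat.sub_right_comm, Nat.add_sub_cancel]

end Advance

section Words

variable {v w : ℕ → ℕ} {n p q : ℕ}

/-- The letter at position `p` of the word `w 1, w 2, …` is a left-to-right maximum; positions
start at `1`. -/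
def IsLeftToRightMax (w : ℕ → ℕ) (p : ℕ) : Prop :=
  ∀ q, 1 ≤ q → q < p → w q < w p

/-- The position of the head of the block containing position `p`, when the word `w 1, w 2, …` is
cut before each of its left-to-right maxima. -/
noncomputable def blockHead (w : ℕ → ℕ) (p : ℕ) : ℕ :=
  sSup {q | 1 ≤ q ∧ q ≤ p ∧ IsLeftToRightMax w q}

lemma IsLeftToRightMax.le (hp : IsLeftToRightMax w p) (hq : 1 ≤ q) (hqp : q ≤ p) : w q ≤ w p := by
  rcases hqp.eq_or_lt with rfl | hlt
  · exact le_rfl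
  · exact (hp q hq hlt).le

lemma isLeftToRightMax_congr (h : EqOn v w (Icc 1 p)) :
    IsLeftToRightMax v p ↔ IsLeftToRightMax w p := by
  refine forall₃_congr fun q hq hqp ↦ ?_
  rw [h ⟨hq, hqp.le⟩, h ⟨hq.trans hqp.le, le_rfl⟩]

lemma blockHead_congr (h : EqOn v w (Icc 1 p)) : blockHead v p = blockHead w p := by
  refine congrArg sSup (Set.ext fun q ↦ and_congr_right fun _ ↦ and_congr_right fun hqp ↦ ?_)
  exact isLeftToRightMax_congr (h.mono (Icc_subset_Icc_right hqp))

lemma blockHead_spec (hp : 1 ≤ p) :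
    1 ≤ blockHead w p ∧ blockHead w p ≤ p ∧ IsLeftToRightMax w (blockHead w p) :=
  Nat.sSup_mem (s := {q | 1 ≤ q ∧ q ≤ p ∧ IsLeftToRightMax w q})
    ⟨1, le_rfl, hp, fun _ h h' ↦ absurd h' h.not_gt⟩ ⟨p, fun _ hq ↦ hq.2.1⟩

lemma IsLeftToRightMax.le_blockHead (hq : IsLeftToRightMax w q) (h1 : 1 ≤ q) (hqp : q ≤ p) :
    q ≤ blockHead w p :=
  le_csSup ⟨p, fun _ hr ↦ hr.2.1⟩ ⟨h1, hqp, hq⟩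

lemma IsLeftToRightMax.isLeast_gt_blockHead (h : IsLeftToRightMax w (p + 1)) (hp : 1 ≤ p)
    (hpn : p < n) :
    IsLeast {y | y ∈ w '' {q ∈ Icc 1 n | IsLeftToRightMax w q} ∧ w (blockHead w p) < y}
      (w (p + 1)) := by
  obtain ⟨hhead1, hheadp, hhead⟩ := blockHead_spec (w := w) hp
  refine ⟨⟨⟨p + 1, ⟨⟨by omega, hpn⟩, h⟩, rfl⟩, h _ hhead1 (by omega)⟩, ?_⟩
  rintro _ ⟨⟨q, ⟨⟨hq1, -⟩, hq⟩, rfl⟩, hlt⟩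
  have hheadq : blockHead w p < q := by
    by_contra! hle
    exact hlt.not_ge (hhead.le hq1 hle)
  have hpq : p < q := by
    by_contra! hle
    exact hheadq.not_ge (hq.le_blockHead hq1 hle)
  exact hq.le (by omega) hpq

end Words

variable {n : ℕ} {f : ℕ → ℕ}

section CayleyTrees

namespace IsCayleyTree

lemma parent_le (hf : IsCayleyTree n f) (i : ℕ) : f i ≤ n := by
  obtain ⟨hzero, hout, hle, -⟩ := hf
  rcases Nat.eq_zero_or_pos i with rfl | hi
  · exact hzero.trans_le n.zero_le
  · rcases le_or_gt i n with hin | hin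
    · exact hle i hi hin
    · exact (hout i hin).trans_le n.zero_le

lemma iterate_le (hf : IsCayleyTree n f) {i : ℕ} (hi : i ≤ n) (k : ℕ) : f^[k] i ≤ n :=
  (show MapsTo f (Iic n) (Iic n) from fun j _ ↦ hf.parent_le j).iterate k hi

lemma iterate_zero (hf : IsCayleyTree n f) (k : ℕ) : f^[k] 0 = 0 :=
  iterate_fixed hf.1 k

lemma iterate_ne_self (hf : IsCayleyTree n f) {i k : ℕ} (hi : i ∈ Icc 1 n) (hk : 0 < k) :
    f^[k] i ≠ i := by
  intro hper
  obtain ⟨m, hm⟩ := hf.2.2.2 i hi.1 hi.2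
  exact Nat.one_le_iff_ne_zero.1 hi.1 (eq_of_isPeriodicPt_of_iterate_eq hf.1 hper hk hm)

lemma iterate_eq_zero (hf : IsCayleyTree n f) {i : ℕ} (hi : i ≤ n) : f^[n] i = 0 := by
  by_contra hne
  have hmaps : MapsTo (fun k ↦ f^[k] i) (Iic n) (Icc 1 n) := by
    intro k hk
    refine ⟨Nat.one_le_iff_ne_zero.2 fun (h : f^[k] i = 0) ↦ hne ?_, hf.iterate_le hi k⟩
    rw [← Nat.sub_add_cancel hk, iterate_add_apply, h, hf.iterate_zero]
  obtain ⟨a, ha, b, -, hab, heq⟩ : ∃ a ∈ Iic n, ∃ b ∈ Iic n, a < b ∧ f^[a] i = f^[b] i := by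
    obtain ⟨a, ha, b, hb, hab, heq⟩ := exists_ne_map_eq_of_ncard_lt_of_maps_to (by simp) hmaps
    rcases lt_or_gt_of_ne hab with h | h
    exacts [⟨a, ha, b, hb, h, heq⟩, ⟨b, hb, a, ha, h, heq.symm⟩]
  refine hf.iterate_ne_self (hmaps ha) (Nat.sub_pos_of_lt hab) ?_
  change f^[b - a] (f^[a] i) = f^[a] i
  rw [← iterate_add_apply, Nat.sub_add_cancel hab.le, heq]

lemma exists_iterate_parent_eq_zero (hf : IsCayleyTree n f) {i : ℕ} (hi : i ∈ Icc 1 n) :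
    ∃ k, f^[k] i ∈ Icc 1 n ∧ f (f^[k] i) = 0 := by
  obtain ⟨k, hk⟩ := hf.2.2.2 i hi.1 hi.2
  induction k generalizing i with
  | zero => exact absurd hk (Nat.one_le_iff_ne_zero.1 hi.1)
  | succ k ih =>
    by_cases hfi : f i = 0
    · exact ⟨0, hi, hfi⟩
    · obtain ⟨l, hl⟩ := ih ⟨Nat.one_le_iff_ne_zero.2 hfi, hf.parent_le i⟩ hk
      exact ⟨l + 1, hl⟩

lemma isRecord_self (hf : IsCayleyTree n f) (hn : 1 ≤ n) : IsRecord n f n :=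
  ⟨hn, le_rfl, fun k hk ↦
    (hf.iterate_le le_rfl k).lt_of_ne (hf.iterate_ne_self ⟨hn, le_rfl⟩ hk)⟩

lemma isRecord_of_parent_eq_zero (hf : IsCayleyTree n f) {i : ℕ} (hi : i ∈ Icc 1 n)
    (hfi : f i = 0) : IsRecord n f i := by
  refine ⟨hi.1, hi.2, fun k hk ↦ ?_⟩
  rw [← Nat.sub_add_cancel hk, iterate_succ_apply, hfi, hf.iterate_zero]
  exact hi.1

lemma isRecord_sInf_isRecord (hf : IsCayleyTree n f) (hn : 1 ≤ n) :
    IsRecord n f (sInf {i | IsRecord n f i}) :=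
  Nat.sInf_mem (s := {i | IsRecord n f i}) ⟨n, hf.isRecord_self hn⟩

lemma parent_sInf_isRecord (hf : IsCayleyTree n f) (hn : 1 ≤ n) :
    f (sInf {i | IsRecord n f i}) = 0 := by
  have hmin := hf.isRecord_sInf_isRecord hn
  obtain ⟨k, hmem, hk⟩ := hf.exists_iterate_parent_eq_zero ⟨hmin.1, hmin.2.1⟩
  have hle : sInf {i | IsRecord n f i} ≤ f^[k] (sInf {i | IsRecord n f i}) :=
    Nat.sInf_le (hf.isRecord_of_parent_eq_zero hmem hk)
  rcases Nat.eq_zero_or_pos k with rfl | hpos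
  · exact hk
  · exact absurd hle (hmin.2.2 k hpos).not_ge

end IsCayleyTree

lemma blob_eq_comp_advance (n : ℕ) (f : ℕ → ℕ) :
    blob n f = f ∘ advance {i | IsRecord n f i} := by
  funext i
  exact (apply_ite f (IsRecord n f i) (nextRecord n f i) i).symm

lemma injOn_parent_iff (hf : IsCayleyTree n f) :
    InjOn f (Icc 1 n) ↔ ∀ v ≤ n, numChildren n f v ≤ 1 := by
  simp only [numChildren, Finset.card_le_one, Finset.mem_filter, Finset.mem_Icc]
  constructor
  · rintro hinj v - i ⟨hi, hiv⟩ j ⟨hj, hjv⟩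
    exact hinj hi hj (hiv.trans hjv.symm)
  · intro h i hi j hj hij
    exact h (f j) (hf.parent_le j) i ⟨hi, hij⟩ j ⟨hj, rfl⟩

lemma mapsTo_parent_iff (hf : IsCayleyTree n f) :
    MapsTo f (Icc 1 n) (Iio n) ↔ numChildren n f n = 0 := by
  rw [numChildren, Finset.card_eq_zero, Finset.filter_eq_empty_iff]
  simp only [Finset.mem_Icc]
  exact forall₂_congr fun i _ ↦ (hf.parent_le i).lt_iff_ne

lemma isPathTree_iff_bijOn (hf : IsCayleyTree n f) :
    IsPathTree n f ↔ BijOn f (Icc 1 n) (Iio n) := by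
  rw [IsPathTree, ← injOn_parent_iff hf, ← mapsTo_parent_iff hf]
  refine ⟨fun h ↦ ?_, fun h ↦ ⟨h.injOn, h.mapsTo⟩⟩
  exact bijOn_of_injOn_of_ncard_le (finite_Iio n) h.2 h.1 (by simp)

theorem bijOn_blob_iff_isPathTree (hf : IsCayleyTree n f) (hn : 1 ≤ n) :
    BijOn (blob n f) (Icc 1 (n - 1)) (Icc 1 (n - 1)) ↔ IsPathTree n f := by
  have hadvance := bijOn_advance (R := {i | IsRecord n f i}) (fun i hi ↦ ⟨hi.1, hi.2.1⟩)
    (hf.isRecord_self hn)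
  have hroot := hf.parent_sInf_isRecord hn
  have hmin := hf.isRecord_sInf_isRecord hn
  set r := sInf {i | IsRecord n f i}
  have hdomain : insert r (Icc 1 n \ {r}) = Icc 1 n :=
    insert_sdiff_self_of_mem ⟨hmin.1, hmin.2.1⟩
  have hrange : insert (f r) (Ico 1 n) = Iio n := by
    ext i
    rw [hroot, mem_insert_iff, mem_Ico, mem_Iio]
    omega
  calc BijOn (blob n f) (Icc 1 (n - 1)) (Icc 1 (n - 1))
      ↔ BijOn (f ∘ advance {i | IsRecord n f i}) (Ico 1 n) (Ico 1 n) := by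
        rw [blob_eq_comp_advance, Icc_sub_one_right_eq_Ico_of_not_isMin (not_isMin_of_lt hn)]
    _ ↔ BijOn f (Icc 1 n \ {r}) (Ico 1 n) := by
        rw [bijOn_comp_iff hadvance.injOn, hadvance.image_eq]
    _ ↔ BijOn f (Icc 1 n) (Iio n) := by
        rw [← BijOn.insert_iff (a := r) (by simp) (by simp [hroot]), hdomain, hrange]
    _ ↔ IsPathTree n f := (isPathTree_iff_bijOn hf).symm

end CayleyTrees

section Paths

/-- The word of the path from the root to `n`, with both endpoints: `pathWord n f p` is the vertex
reached from `n` after `n - p` steps towards the root. For a path tree its interior word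
`w 1 ⋯ w (n - 1)` stands at the positions `1, …, n - 1`. -/
def pathWord (n : ℕ) (f : ℕ → ℕ) (p : ℕ) : ℕ := f^[n - p] n

lemma pathWord_self (n : ℕ) (f : ℕ → ℕ) : pathWord n f n = n := by
  rw [pathWord, Nat.sub_self, iterate_zero_apply]

lemma iterate_pathWord (f : ℕ → ℕ) {k p : ℕ} (hkp : k ≤ p) (hpn : p ≤ n) :
    f^[k] (pathWord n f p) = pathWord n f (p - k) := by
  rw [pathWord, pathWord, ← iterate_add_apply, show k + (n - p) = n - (p - k) by omega]

lemma parent_pathWord_succ (f : ℕ → ℕ) {p : ℕ} (hp : p < n) :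
    f (pathWord n f (p + 1)) = pathWord n f p :=
  iterate_pathWord f (Nat.le_add_left 1 p) hp

lemma pathWord_zero (hf : IsCayleyTree n f) : pathWord n f 0 = 0 :=
  hf.iterate_eq_zero le_rfl

lemma eqOn_pathWord {w : ℕ → ℕ} (hlast : f n = w (n - 1))
    (hw : ∀ p, 1 ≤ p → p + 1 ≤ n - 1 → f (w (p + 1)) = w p) :
    EqOn w (pathWord n f) (Icc 1 (n - 1)) := by
  rintro p ⟨hp1, hpn⟩
  refine Nat.decreasingInduction' (P := fun p ↦ w p = pathWord n f p) ?_ hpn ?_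
  · intro k hkn hpk hk
    rw [← hw k (hp1.trans hpk) hkn, hk, parent_pathWord_succ f (by omega)]
  · rw [← hlast, ← parent_pathWord_succ f (by omega), Nat.sub_add_cancel (by omega), pathWord_self]

lemma exists_iterate_eq_of_isPathTree (hf : IsCayleyTree n f) (hpath : IsPathTree n f) {i : ℕ}
    (hi : i ∈ Icc 1 n) : ∃ k, f^[k] n = i := by
  have hbij := (isPathTree_iff_bijOn hf).1 hpath
  obtain ⟨m, hm⟩ := hf.2.2.2 i hi.1 hi.2
  induction m generalizing i with
  | zero => exact absurd hm (Nat.one_le_iff_ne_zero.1 hi.1)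
  | succ m ih =>
    by_cases hfi : f i = 0
    · obtain ⟨k, hmem, hk⟩ := hf.exists_iterate_parent_eq_zero ⟨hi.1.trans hi.2, le_rfl⟩
      exact ⟨k, hbij.injOn hmem hi (hk.trans hfi.symm)⟩
    · obtain ⟨k, hk⟩ := ih ⟨Nat.one_le_iff_ne_zero.2 hfi, hf.parent_le i⟩ hm
      cases k with
      | zero => exact absurd hk (hbij.mapsTo hi).ne'
      | succ k =>
        rw [iterate_succ_apply'] at hk
        refine ⟨k, hbij.injOn ⟨Nat.one_le_iff_ne_zero.2 fun h ↦ hfi ?_, ?_⟩ hi hk⟩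
        · rw [← hk, h, hf.1]
        · exact hf.iterate_le le_rfl k

lemma image_pathWord (hf : IsCayleyTree n f) (hpath : IsPathTree n f) :
    pathWord n f '' Icc 1 n = Icc 1 n := by
  have hsurj : Icc 1 n ⊆ pathWord n f '' Icc 1 n := by
    intro i hi
    obtain ⟨k, rfl⟩ := exists_iterate_eq_of_isPathTree hf hpath hi
    have hkn : k < n := by
      by_contra! hnk
      refine Nat.one_le_iff_ne_zero.1 hi.1 ?_
      rw [← Nat.sub_add_cancel hnk, iterate_add_apply, hf.iterate_eq_zero le_rfl, hf.iterate_zero]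
    exact ⟨n - k, ⟨by omega, by omega⟩, by rw [pathWord, Nat.sub_sub_self hkn.le]⟩
  exact (eq_of_subset_of_ncard_le hsurj ncard_image_le).symm

lemma isRecord_pathWord_iff (hf : IsCayleyTree n f) (hpath : IsPathTree n f) {p : ℕ}
    (hp : p ∈ Icc 1 n) :
    IsRecord n f (pathWord n f p) ↔ IsLeftToRightMax (pathWord n f) p := by
  have hmem : pathWord n f p ∈ Icc 1 n := image_pathWord hf hpath ▸ mem_image_of_mem _ hp
  constructor
  · intro h q _ hqp
    have hlt := h.2.2 (p - q) (Nat.sub_pos_of_lt hqp)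
    rwa [iterate_pathWord f (Nat.sub_le p q) hp.2, Nat.sub_sub_self hqp.le] at hlt
  · refine fun h ↦ ⟨hmem.1, hmem.2, fun k hk ↦ ?_⟩
    rcases lt_or_ge k p with hkp | hpk
    · rw [iterate_pathWord f hkp.le hp.2]
      exact h _ (Nat.sub_pos_of_lt hkp) (Nat.sub_lt hp.1 hk)
    · rw [← Nat.sub_add_cancel hpk, iterate_add_apply, iterate_pathWord f le_rfl hp.2,
        Nat.sub_self, pathWord_zero hf, hf.iterate_zero]
      exact hmem.1

lemma setOf_isRecord_eq_image_pathWord (hf : IsCayleyTree n f) (hpath : IsPathTree n f) :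
    {i | IsRecord n f i} = pathWord n f '' {p ∈ Icc 1 n | IsLeftToRightMax (pathWord n f) p} := by
  ext i
  constructor
  · intro hi
    obtain ⟨p, hp, rfl⟩ := (image_pathWord hf hpath).ge ⟨hi.1, hi.2.1⟩
    exact ⟨p, ⟨hp, (isRecord_pathWord_iff hf hpath hp).1 hi⟩, rfl⟩
  · rintro ⟨p, ⟨hp, hmax⟩, rfl⟩
    exact (isRecord_pathWord_iff hf hpath hp).2 hmax

lemma blob_pathWord_blockHead (hf : IsCayleyTree n f) (hpath : IsPathTree n f) {p : ℕ}
    (hp : 1 ≤ p) (hpn : p < n) (hmax : IsLeftToRightMax (pathWord n f) (p + 1)) :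
    blob n f (pathWord n f (blockHead (pathWord n f) p)) = pathWord n f p := by
  obtain ⟨hhead1, hheadp, hhead⟩ := blockHead_spec (w := pathWord n f) hp
  have hnext : nextRecord n f (pathWord n f (blockHead (pathWord n f) p)) =
      pathWord n f (p + 1) := by
    have hleast := hmax.isLeast_gt_blockHead hp hpn
    rw [← setOf_isRecord_eq_image_pathWord hf hpath] at hleast
    exact hleast.csInf_eq
  rw [blob, if_pos ((isRecord_pathWord_iff hf hpath ⟨hhead1, hheadp.trans hpn.le⟩).2 hhead), hnext,
    parent_pathWord_succ f hpn]

lemma blob_pathWord_succ (hf : IsCayleyTree n f) (hpath : IsPathTree n f) {p : ℕ} (hpn : p < n)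
    (hmax : ¬ IsLeftToRightMax (pathWord n f) (p + 1)) :
    blob n f (pathWord n f (p + 1)) = pathWord n f p := by
  rw [blob, if_neg (mt (isRecord_pathWord_iff hf hpath ⟨by omega, hpn⟩).1 hmax),
    parent_pathWord_succ f hpn]

lemma isLeftToRightMax_pathWord_succ_iff (hf : IsCayleyTree n f) (hpath : IsPathTree n f)
    {w : ℕ → ℕ} (hw : EqOn w (pathWord n f) (Icc 1 (n - 1))) {p : ℕ} (hpn : p < n) :
    IsLeftToRightMax (pathWord n f) (p + 1) ↔ p = n - 1 ∨ IsLeftToRightMax w (p + 1) := by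
  by_cases hp : p = n - 1
  · have hlast : IsRecord n f (pathWord n f (p + 1)) := by
      rw [hp, Nat.sub_add_cancel (by omega), pathWord_self]
      exact hf.isRecord_self (by omega)
    exact iff_of_true ((isRecord_pathWord_iff hf hpath ⟨by omega, hpn⟩).1 hlast) (Or.inl hp)
  · rw [or_iff_right hp]
    exact (isLeftToRightMax_congr (hw.mono (Icc_subset_Icc_right (by omega)))).symm

end Paths

end

/-- The record code of a Cayley tree is a permutation of `{1,…,n-1}`
iff the tree is a path with endpoints `0` and `n`.  Moreover, if `w` is the interior
word of such a path (so `f (w 1) = 0`, `f (w (p+1)) = w p`, `f n = w (n-1)`), then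
the record code is the inverse of the Foata fundamental transform of `w`: composing
the record code with the map sending each letter to the next letter of its
left-to-right-maximum block (the last letter of a block going to the block's head)
gives the identity on the letters of `w`. -/
theorem stmt3 (n : ℕ) (hn : 1 ≤ n) (f : ℕ → ℕ) (hf : IsCayleyTree n f) :
    (Set.BijOn (blob n f) (Set.Icc 1 (n - 1)) (Set.Icc 1 (n - 1)) ↔ IsPathTree n f) ∧
    (∀ w : ℕ → ℕ, IsPathTree n f →
      (2 ≤ n → f (w 1) = 0) →
      (∀ p, 1 ≤ p → p + 1 ≤ n - 1 → f (w (p + 1)) = w p) →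
      (2 ≤ n → f n = w (n - 1)) →
      ∀ p, 1 ≤ p → p ≤ n - 1 →
        blob n f
          (if p = n - 1 ∨ (∀ q, 1 ≤ q → q < p + 1 → w q < w (p + 1)) then
            w (sSup {q | 1 ≤ q ∧ q ≤ p ∧ ∀ r, 1 ≤ r → r < q → w r < w q})
          else w (p + 1)) = w p) := by
  refine ⟨bijOn_blob_iff_isPathTree hf hn, fun w hpath _ hw hlast p hp1 hp ↦ ?_⟩
  have hpn : p < n := by omega
  have hword : Set.EqOn w (pathWord n f) (Set.Icc 1 (n - 1)) :=
    eqOn_pathWord (hlast (by omega)) hw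
  have hiff := isLeftToRightMax_pathWord_succ_iff hf hpath hword hpn
  rw [hword ⟨hp1, hp⟩]
  split_ifs with hmax
  · change blob n f (w (blockHead w p)) = pathWord n f p
    have hhead := blockHead_spec (w := pathWord n f) hp1
    rw [blockHead_congr (hword.mono (Set.Icc_subset_Icc_right hp)),
      hword ⟨hhead.1, hhead.2.1.trans hp⟩]
    exact blob_pathWord_blockHead hf hpath hp1 hpn (hiff.2 hmax)
  · rw [hword ⟨by omega, by omega⟩]
    exact blob_pathWord_succ hf hpath hpn (mt hiff.1 hmax)

end WearyParking
end

section
/- Let π be a parking function of length n. Then the set of records of the parking tree PT(π) equals the set of left-to-right maxima of the word ω_π(1) ω_π(2) ⋯ ω_π(n); that is, Rec(PT(π)) = Rec(π). -/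
/-!
Treat the root `0` as a car parked at spot `0`; then `spot π` is a bijection of `{0,…,n}` with
inverse `ω_π`, and the parent of a car `c ≥ 1` is the car parked just before the spot that `c`
prefers. The cars strictly between the parent of `c` and `c` are those that `c` had to pass, so
they arrived earlier and are smaller than `c`. By induction along the path to the root, `c` and
its ancestors are therefore all smaller than `v` exactly when all cars parked at or left of the
spot of `c` are. Applied to the parent of `v`, this says that `v` exceeds all of its ancestors
exactly when it exceeds all cars parked further left.
-/

open scoped Classical

namespace WearyParking

section ParkingProcess

variable (π : ℕ → ℕ)

lemma length_spotList (c : ℕ) : (spotList π c).length = c := by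
  induction c with
  | zero => rfl
  | succ c ih => simp [spotList, ih]

-- `spot π 0` is the default value read off the empty list; it serves as the spot of the root `0`.
lemma spot_zero : spot π 0 = 0 := rfl

lemma spot_succ (c : ℕ) : spot π (c + 1) = sInf {s | π (c + 1) ≤ s ∧ s ∉ spotList π c} := by
  simp [spot, spotList, length_spotList]

lemma mem_spotList {c s : ℕ} : s ∈ spotList π c ↔ s ∈ spot π '' Set.Icc 1 c := by
  induction c with
  | zero => simp [spotList]
  | succ c ih =>
    rw [spotList, List.mem_append, ih, List.mem_singleton, ← spot_succ,
      ← Set.Ico_insert_right (Nat.le_add_left 1 c), Set.Ico_add_one_right_eq_Icc,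
      Set.image_insert_eq, Set.mem_insert_iff, or_comm]

variable {c : ℕ}

lemma isLeast_spot (hc : 1 ≤ c) :
    IsLeast (Set.Ici (π c) \ spot π '' Set.Ico 1 c) (spot π c) := by
  obtain ⟨c, rfl⟩ := Nat.exists_eq_add_of_le' hc
  have hfree : {s | π (c + 1) ≤ s ∧ s ∉ spotList π c} =
      Set.Ici (π (c + 1)) \ spot π '' Set.Ico 1 (c + 1) := by
    ext s
    simp only [mem_spotList, Set.Ico_add_one_right_eq_Icc, Set.mem_ofPred_eq, Set.mem_sdiff,
      Set.mem_Ici]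
  rw [spot_succ, hfree]
  exact isLeast_csInf ((Set.Ici_infinite _).sdiff ((Set.finite_Ico 1 _).image _)).nonempty

lemma pref_le_spot (hc : 1 ≤ c) : π c ≤ spot π c :=
  (isLeast_spot π hc).1.1

lemma injOn_spot_Ici_one : Set.InjOn (spot π) (Set.Ici 1) := by
  intro c hc d hd heq
  wlog hdc : d ≤ c generalizing c d
  · exact (this hd hc heq.symm (Nat.le_of_not_ge hdc)).symm
  by_contra hne
  exact (isLeast_spot π hc).1.2 ⟨d, ⟨hd, hdc.lt_of_ne' hne⟩, heq.symm⟩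

lemma exists_spot_eq_of_pref_le_of_lt_spot {s : ℕ} (hc : 1 ≤ c) (hs : π c ≤ s)
    (hsc : s < spot π c) : ∃ d < c, spot π d = s := by
  by_contra! hfree
  have hle : spot π c ≤ s := (isLeast_spot π hc).2 ⟨hs, fun ⟨d, hd, hds⟩ => hfree d hd.2 hds⟩
  exact hsc.not_ge hle

end ParkingProcess

section ParkingFunction

variable {n : ℕ} {π : ℕ → ℕ} {c : ℕ}

lemma spot_pos (hπ : IsParkingFun n π) (hc : 1 ≤ c) (hcn : c ≤ n) : 0 < spot π c :=
  (hπ.1 c hc hcn).1.trans (pref_le_spot π hc)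

lemma injOn_spot (hπ : IsParkingFun n π) : Set.InjOn (spot π) (Set.Iic n) := by
  intro c hc d hd heq
  rcases Nat.eq_zero_or_pos c with rfl | hc1 <;> rcases Nat.eq_zero_or_pos d with rfl | hd1
  · rfl
  · exact ((spot_pos hπ hd1 hd).ne heq).elim
  · exact ((spot_pos hπ hc1 hc).ne' heq).elim
  · exact injOn_spot_Ici_one π hc1 hd1 heq

lemma mapsTo_spot (hπ : IsParkingFun n π) : Set.MapsTo (spot π) (Set.Iic n) (Set.Iic n) := by
  intro c hc
  rcases Nat.eq_zero_or_pos c with rfl | hc1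
  · exact Nat.zero_le n
  · exact hπ.2.2 c hc1 hc

lemma bijOn_spot (hπ : IsParkingFun n π) : Set.BijOn (spot π) (Set.Iic n) (Set.Iic n) :=
  ((Set.finite_Iic n).injOn_iff_bijOn_of_mapsTo (mapsTo_spot hπ)).1 (injOn_spot hπ)

lemma birdsEye_spot (hπ : IsParkingFun n π) (hcn : c ≤ n) : birdsEye n π (spot π c) = c := by
  rcases Nat.eq_zero_or_pos c with rfl | hc
  · simp only [birdsEye, spot_zero, if_true]
  · have hcars : {d | 1 ≤ d ∧ d ≤ n ∧ spot π d = spot π c} = {c} :=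
      Set.eq_singleton_iff_unique_mem.2
        ⟨⟨hc, hcn, rfl⟩, fun _ hd => injOn_spot hπ hd.2.1 hcn hd.2.2⟩
    rw [birdsEye, if_neg (spot_pos hπ hc hcn).ne', hcars, csInf_singleton]

lemma spot_birdsEye (hπ : IsParkingFun n π) {i : ℕ} (hi : i ≤ n) :
    spot π (birdsEye n π i) = i := by
  obtain ⟨c, hc, rfl⟩ := (bijOn_spot hπ).surjOn hi
  rw [birdsEye_spot hπ hc]

lemma birdsEye_le (hπ : IsParkingFun n π) {i : ℕ} (hi : i ≤ n) : birdsEye n π i ≤ n := by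
  obtain ⟨c, hc, rfl⟩ := (bijOn_spot hπ).surjOn hi
  rwa [birdsEye_spot hπ hc]

lemma isPfRecord_iff_forall_spot_lt (hπ : IsParkingFun n π) {v : ℕ} :
    IsPfRecord n π v ↔ 1 ≤ v ∧ v ≤ n ∧ ∀ d ≤ n, spot π d < spot π v → d < v := by
  constructor
  · rintro ⟨i, hi, hin, rfl, hmax⟩
    obtain ⟨c, hc, rfl⟩ := (bijOn_spot hπ).surjOn hin
    rw [birdsEye_spot hπ hc] at hmax ⊢
    have hc1 : 1 ≤ c := Nat.pos_of_ne_zero fun h => by simp [h, spot_zero] at hi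
    refine ⟨hc1, hc, fun d hd hdc => ?_⟩
    rcases Nat.eq_zero_or_pos d with rfl | hd1
    · exact hc1
    · simpa only [birdsEye_spot hπ hd] using hmax (spot π d) (spot_pos hπ hd1 hd) hdc
  · rintro ⟨hv, hvn, hmax⟩
    refine ⟨spot π v, spot_pos hπ hv hvn, mapsTo_spot hπ hvn, birdsEye_spot hπ hvn,
      fun j _ hj => ?_⟩
    obtain ⟨d, hd, rfl⟩ := (bijOn_spot hπ).surjOn (hj.le.trans (mapsTo_spot hπ hvn))
    rw [birdsEye_spot hπ hd]
    exact hmax d hd hj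

end ParkingFunction

section ParkingTree

lemma isRecord_iff_forall_iterate_lt {n v : ℕ} {f : ℕ → ℕ} :
    IsRecord n f v ↔ 1 ≤ v ∧ v ≤ n ∧ ∀ k, f^[k] (f v) < v := by
  simp only [IsRecord, ← Function.iterate_succ_apply]
  refine and_congr_right fun _ => and_congr_right fun _ => ⟨fun h k => h (k + 1) (by omega), ?_⟩
  intro h k hk
  obtain ⟨k, rfl⟩ := Nat.exists_eq_add_of_le' hk
  exact h k

lemma ptParent_zero (n : ℕ) (π : ℕ → ℕ) : ptParent n π 0 = 0 := by
  simp [ptParent]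

variable {n : ℕ} {π : ℕ → ℕ} {c v : ℕ}

lemma ptParent_le (hπ : IsParkingFun n π) (hc : 1 ≤ c) (hcn : c ≤ n) : ptParent n π c ≤ n := by
  rw [ptParent, if_pos ⟨hc, hcn⟩]
  exact birdsEye_le hπ ((Nat.sub_le _ 1).trans (hπ.1 c hc hcn).2)

lemma spot_ptParent_add_one (hπ : IsParkingFun n π) (hc : 1 ≤ c) (hcn : c ≤ n) :
    spot π (ptParent n π c) + 1 = π c := by
  obtain ⟨hpref, hprefn⟩ := hπ.1 c hc hcn
  rw [ptParent, if_pos ⟨hc, hcn⟩, spot_birdsEye hπ ((Nat.sub_le _ 1).trans hprefn),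
    Nat.sub_add_cancel hpref]

lemma spot_ptParent_lt_spot (hπ : IsParkingFun n π) (hc : 1 ≤ c) (hcn : c ≤ n) :
    spot π (ptParent n π c) < spot π c :=
  (spot_ptParent_add_one hπ hc hcn).trans_le (pref_le_spot π hc)

lemma lt_of_spot_ptParent_lt_of_spot_lt (hπ : IsParkingFun n π) (hc : 1 ≤ c) (hcn : c ≤ n) {d : ℕ}
    (hdn : d ≤ n) (hparent : spot π (ptParent n π c) < spot π d) (hdc : spot π d < spot π c) :
    d < c := by
  have hpref : π c ≤ spot π d := by
    rw [← spot_ptParent_add_one hπ hc hcn]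
    exact hparent
  obtain ⟨e, hec, hed⟩ := exists_spot_eq_of_pref_le_of_lt_spot π hc hpref hdc
  rwa [← injOn_spot hπ (hec.le.trans hcn) hdn hed]

lemma forall_spot_lt_iff_forall_spot_le_ptParent (hπ : IsParkingFun n π) (hc : 1 ≤ c)
    (hcn : c ≤ n) (hcv : c ≤ v) :
    (∀ d ≤ n, spot π d < spot π c → d < v) ↔
      ∀ d ≤ n, spot π d ≤ spot π (ptParent n π c) → d < v := by
  refine ⟨fun h d hd hdp => h d hd (hdp.trans_lt (spot_ptParent_lt_spot hπ hc hcn)),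
    fun h d hd hdc => ?_⟩
  rcases le_or_gt (spot π d) (spot π (ptParent n π c)) with hdp | hpd
  · exact h d hd hdp
  · exact (lt_of_spot_ptParent_lt_of_spot_lt hπ hc hcn hd hpd hdc).trans_le hcv

lemma forall_spot_le_iff (hπ : IsParkingFun n π) (hcn : c ≤ n) :
    (∀ d ≤ n, spot π d ≤ spot π c → d < v) ↔
      c < v ∧ ∀ d ≤ n, spot π d < spot π c → d < v := by
  refine ⟨fun h => ⟨h c hcn le_rfl, fun d hd hdc => h d hd hdc.le⟩, fun ⟨hcv, h⟩ d hd hdc => ?_⟩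
  rcases hdc.eq_or_lt with heq | hlt
  · rwa [injOn_spot hπ hd hcn heq]
  · exact h d hd hlt

lemma forall_iterate_ptParent_lt_iff (hπ : IsParkingFun n π) (hcn : c ≤ n) :
    (∀ k, (ptParent n π)^[k] c < v) ↔ ∀ d ≤ n, spot π d ≤ spot π c → d < v := by
  induction hs : spot π c using Nat.strong_induction_on generalizing c with
  | _ s ih =>
    subst hs
    rw [forall_spot_le_iff hπ hcn]
    rcases Nat.eq_zero_or_pos c with rfl | hc
    · simp [Function.iterate_fixed (ptParent_zero n π), spot_zero]
    · have hparent := ih _ (spot_ptParent_lt_spot hπ hc hcn) (ptParent_le hπ hc hcn) rfl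
      rw [← Nat.and_forall_add_one]
      refine and_congr_right fun hcv => ?_
      rw [forall_spot_lt_iff_forall_spot_le_ptParent hπ hc hcn hcv.le, ← hparent]
      simp only [Function.iterate_succ_apply]

end ParkingTree

/-- The records of the parking tree `PT(π)` are exactly the
left-to-right maxima of the word `ω_π(1) ⋯ ω_π(n)`. -/
theorem stmt11 (n : ℕ) (π : ℕ → ℕ) (hπ : IsParkingFun n π) :
    ∀ v, IsRecord n (ptParent n π) v ↔ IsPfRecord n π v := by
  intro v
  rw [isRecord_iff_forall_iterate_lt, isPfRecord_iff_forall_spot_lt hπ]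
  refine and_congr_right fun hv => and_congr_right fun hvn => ?_
  rw [forall_iterate_ptParent_lt_iff hπ (ptParent_le hπ hv hvn),
    forall_spot_lt_iff_forall_spot_le_ptParent hπ hv hvn le_rfl]

end WearyParking
end
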